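/- arXiv:1205.2116 — 2 statements merged into one kernel-verified Lean document; each statement's English description precedes it below -/
import Mathlib

section
/- Let R be a Noetherian ring with a ring automorphism σ, let Q and P be prime ideals of R, and let A be an ideal of R such that there is a link Q ⇝ P via A. Suppose n ≥ 1 is an integer with σⁿ(Q) = Q, σⁿ(P) = P, and σⁿ(A) = A, and set Q⁰ = ⋂_{i=0}^{n-1} σⁱ(Q), P⁰ = ⋂_{i=0}^{n-1} σⁱ(P), A⁰ = ⋂_{i=0}^{n-1} σⁱ(A). Then A⁰ ≠ Q⁰ ∩ P⁰; that is, A⁰ is strictly contained in Q⁰ ∩ P⁰. -/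
variable {R : Type*}

/-- The image of a two-sided ideal under a ring automorphism `σ`
(an element is in `σ(I)` iff its preimage under `σ` is in `I`). -/
def TwoSidedIdeal.mapEquiv [Ring R] (σ : R ≃+* R) (I : TwoSidedIdeal R) : TwoSidedIdeal R :=
  I.comap (σ.symm : R ≃+* R)

/-- A two-sided ideal `P ⊊ R` is prime: whenever `a R b ⊆ P`, either `a ∈ P` or `b ∈ P`. -/
def TwoSidedIdeal.IsPrime [Ring R] (P : TwoSidedIdeal R) : Prop :=
  P ≠ ⊤ ∧ ∀ a b : R, (∀ r : R, a * r * b ∈ P) → a ∈ P ∨ b ∈ P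

/-- `g` is regular modulo `P`, i.e. the image of `g` in `R/P` is a non-zero-divisor. -/
def RegularMod [Ring R] (P : TwoSidedIdeal R) (g : R) : Prop :=
  (∀ r : R, g * r ∈ P → r ∈ P) ∧ (∀ r : R, r * g ∈ P → r ∈ P)

/-- There is a link `Q ⇝ P` via the ideal `A`: `Q·P ⊆ A ⊊ Q ∩ P` and `(Q ∩ P)/A` is
torsionfree as a right `R/P`-module and as a left `R/Q`-module. -/
def LinkVia [Ring R] (Q P A : TwoSidedIdeal R) : Prop :=
  (∀ q ∈ Q, ∀ p ∈ P, q * p ∈ A) ∧ A < Q ⊓ P ∧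
  ∀ f ∈ Q ⊓ P, f ∉ A →
    (∀ g : R, RegularMod P g → f * g ∉ A) ∧
    (∀ g : R, RegularMod Q g → g * f ∉ A)

/-!
Let `f ∈ Q ∩ P` with `f ∉ A`. If `g` is regular modulo `Q` and `k` is regular modulo `P`, then
torsionfreeness gives `g * f * k ∉ A`, so it suffices to choose `g` and `k` with
`g * f * k ∈ Q⁰ ∩ P⁰`. An ideal `σⁱ(P)` contained in `P` equals `P`, because `σⁿ` fixes `P`. Hence
the intersection of the conjugates of `P` other than `P` itself is not contained in the prime `P`,
and by Goldie's theorem in the prime ring `R/P` this intersection contains an element `k` that is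
regular modulo `P`; then `P * k ⊆ P⁰`. The element `g` is found in the same way.

The part of Goldie's theorem needed here says that an essential left ideal of a semiprime left
Noetherian ring contains a regular element.
-/

section Essential

variable {M : Type*} [Ring R] [AddCommGroup M] [Module R M]

/-- A submodule is essential if it meets every nonzero submodule nontrivially. -/
def IsEssential (N : Submodule R M) : Prop :=
  ∀ L : Submodule R M, Disjoint N L → L = ⊥

theorem isEssential_range_of_injective [IsNoetherian R M] {f : M →ₗ[R] M}
    (hf : Function.Injective f) : IsEssential f.range := by
  intro L hL
  have hinj : Function.Injective (f.coprod L.subtype) := by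
    rw [← LinearMap.ker_eq_bot, LinearMap.ker_coprod_of_disjoint_range, LinearMap.ker_eq_bot.2 hf,
      L.ker_subtype, Submodule.prod_bot]
    rwa [L.range_subtype]
  have := IsNoetherian.subsingleton_of_prod_injective _ hinj
  exact Submodule.eq_bot_of_subsingleton

end Essential

section Semiprime

variable [Ring R]

/-- A ring is semiprime if `a R a = 0` forces `a = 0`. -/
def IsSemiprimeRing (R : Type*) [Ring R] : Prop :=
  ∀ a : R, (∀ r, a * r * a = 0) → a = 0

/-- The elements `a` for which `a` and `a ^ 2` have the same left annihilator, equivalently those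
for which the left ideal `R a` meets the left annihilator of `a` trivially. -/
def LeftAnnStable (a : R) : Prop :=
  ∀ y, y * a * a = 0 → y * a = 0

theorem isNilpotent_mul_of_isNilpotent_mul_swap {x s : R} (h : IsNilpotent (x * s)) :
    IsNilpotent (s * x) := by
  obtain ⟨k, hk⟩ := h
  have hsemiconj : SemiconjBy x (s * x) (x * s) := (mul_assoc x s x).symm
  refine ⟨k + 1, ?_⟩
  rw [pow_succ', mul_assoc, hsemiconj.pow_right k, hk, zero_mul, mul_zero]

theorem exists_not_isNilpotent_mul [IsNoetherianRing R] (hR : IsSemiprimeRing R) {x : R}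
    (hx : x ≠ 0) : ∃ s, ¬ IsNilpotent (x * s) := by
  -- If `a` has maximal left annihilator among the nonzero elements of `x R`, then every nonzero
  -- element of `a R` has the same left annihilator as `a`; so `a r a ≠ 0` propagates to all the
  -- elements `(a r)ᵏ a`.
  obtain ⟨_, ⟨s, ha, rfl⟩, hmax⟩ := set_has_maximal_iff_noetherian.2 ‹IsNoetherianRing R›
    {L | ∃ s, x * s ≠ 0 ∧ L = Ideal.torsionOf R R (x * s)} ⟨_, 1, by rwa [mul_one], rfl⟩
  set a := x * s with a_def
  have ann_eq (b y : R) (hab : a * b ≠ 0) (hy : y * (a * b) = 0) : y * a = 0 := by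
    have hle : Ideal.torsionOf R R a ≤ Ideal.torsionOf R R (a * b) := by
      intro z hz
      rw [Ideal.mem_torsionOf_iff, smul_eq_mul] at hz ⊢
      rw [← mul_assoc, hz, zero_mul]
    have hnlt := hmax (Ideal.torsionOf R R (a * b)) ⟨s * b, by rwa [← mul_assoc], by
      rw [← mul_assoc]⟩
    exact (hle.eq_of_not_lt hnlt).ge hy
  obtain ⟨r, hr⟩ : ∃ r, a * r * a ≠ 0 := by
    by_contra! h
    exact ha (hR a h)
  have hpow (k : ℕ) : (a * r) ^ k * a ≠ 0 := by
    induction k with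
    | zero => rwa [pow_zero, one_mul]
    | succ k ih =>
      have hsemiconj : SemiconjBy a (r * a) (a * r) := (mul_assoc a r a).symm
      rw [← hsemiconj.pow_right k] at ih
      rw [pow_succ', mul_assoc, ← hsemiconj.pow_right k]
      exact fun h ↦ hr (ann_eq _ _ ih h)
  refine ⟨s * r, fun ⟨k, hk⟩ ↦ hpow k ?_⟩
  rw [a_def, mul_assoc x, hk, zero_mul]

theorem exists_leftAnnStable_pow_succ [IsNoetherianRing R] (u : R) :
    ∃ k, LeftAnnStable (u ^ (k + 1)) := by
  obtain ⟨k, hk⟩ := (Module.End.eventually_disjoint_ker_pow_range_pow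
    (RingEquiv.moduleEndSelf R (.op u))).exists_forall_of_atTop
  refine ⟨k, fun y hy ↦ ?_⟩
  have hdisj := hk (k + 1) k.le_succ
  rw [← map_pow, ← MulOpposite.op_pow] at hdisj
  exact (Submodule.disjoint_def.1 hdisj) _ hy ⟨y, rfl⟩

theorem exists_leftAnnStable_mul_left [IsNoetherianRing R] (hR : IsSemiprimeRing R) {x : R}
    (hx : x ≠ 0) : ∃ s, s * x ≠ 0 ∧ LeftAnnStable (s * x) := by
  obtain ⟨s, hs⟩ := exists_not_isNilpotent_mul hR hx
  obtain ⟨k, hk⟩ := exists_leftAnnStable_pow_succ (s * x)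
  have hne : (s * x) ^ (k + 1) ≠ 0 :=
    fun h ↦ hs (isNilpotent_mul_of_isNilpotent_mul_swap ⟨_, h⟩)
  rw [pow_succ, ← mul_assoc] at hk hne
  exact ⟨_, hne, hk⟩

theorem exists_leftAnnStable_mul_right [IsNoetherianRing R] (hR : IsSemiprimeRing R) {x : R}
    (hx : x ≠ 0) : ∃ s, x * s ≠ 0 ∧ LeftAnnStable (x * s) := by
  obtain ⟨s, hs⟩ := exists_not_isNilpotent_mul hR hx
  obtain ⟨k, hk⟩ := exists_leftAnnStable_pow_succ (x * s)
  have hne : (x * s) ^ (k + 1) ≠ 0 := fun h ↦ hs ⟨_, h⟩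
  rw [pow_succ', mul_assoc] at hk hne
  exact ⟨_, hne, hk⟩

namespace LeftAnnStable

variable {a c : R}

theorem mul_eq_zero_of_mul_add_eq_zero (hc : LeftAnnStable c) (hac : a * c = 0) {y : R}
    (hy : y * (c + a) = 0) : y * c = 0 ∧ y * a = 0 := by
  have hyc : y * c = 0 := hc y <| calc
    y * c * c = y * (c + a) * c - y * (a * c) := by noncomm_ring
    _ = 0 := by rw [hy, hac, zero_mul, mul_zero, sub_zero]
  exact ⟨hyc, by rwa [mul_add, hyc, zero_add] at hy⟩

theorem add (hc : LeftAnnStable c) (ha : LeftAnnStable a) (hac : a * c = 0) :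
    LeftAnnStable (c + a) := by
  intro y hy
  obtain ⟨hyc', hya'⟩ := hc.mul_eq_zero_of_mul_add_eq_zero hac hy
  have hyc : y * c = 0 := hc y <| by rwa [mul_add, add_mul, mul_assoc y a, hac, mul_zero,
    add_zero] at hyc'
  have hya : y * a = 0 := ha y <| by rwa [mul_add, hyc, zero_add] at hya'
  rw [mul_add, hyc, hya, add_zero]

theorem disjoint_sup_span_torsionOf_add (hc : LeftAnnStable c) (ha : LeftAnnStable a)
    (hac : a * c = 0) {J : Ideal R} (hJ : Disjoint J (Ideal.torsionOf R R c)) :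
    Disjoint (J ⊔ Ideal.span {a}) (Ideal.torsionOf R R (c + a)) := by
  rw [Submodule.disjoint_def] at hJ ⊢
  intro y hyJ hy
  obtain ⟨j, hj, _, hs, rfl⟩ := Submodule.mem_sup.1 hyJ
  obtain ⟨s, rfl⟩ := Ideal.mem_span_singleton'.1 hs
  rw [Ideal.mem_torsionOf_iff, smul_eq_mul] at hy
  obtain ⟨hyc, hya⟩ := hc.mul_eq_zero_of_mul_add_eq_zero hac hy
  obtain rfl : j = 0 := hJ j hj <| by
    rwa [add_mul, mul_assoc, hac, mul_zero, add_zero] at hyc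
  rw [zero_add] at hya ⊢
  exact ha s hya

end LeftAnnStable

theorem exists_isRightRegular_mem_of_isEssential [IsNoetherianRing R] (hR : IsSemiprimeRing R)
    {I : Ideal R} (hI : IsEssential I) : ∃ c ∈ I, IsRightRegular c := by
  -- Choose `c` so that some left ideal `J` disjoint from the left annihilator of `c` is as large as
  -- possible. A nonzero `a ∈ I` killing `c` on the left would allow `J` to be enlarged by `R a` on
  -- replacing `c` by `c + a`.
  obtain ⟨J, ⟨c, hcI, hc, hJ⟩, hmax⟩ := set_has_maximal_iff_noetherian.2 ‹IsNoetherianRing R›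
    {J | ∃ c ∈ I, LeftAnnStable c ∧ Disjoint J (Ideal.torsionOf R R c)}
    ⟨⊥, 0, I.zero_mem, fun y _ ↦ mul_zero y, disjoint_bot_left⟩
  suffices hann : Ideal.torsionOf R R c = ⊥ from
    ⟨c, hcI, isRightRegular_iff_left_eq_zero_of_mul.2 ((Submodule.eq_bot_iff _).1 hann)⟩
  refine hI _ (Submodule.disjoint_def.2 fun x hxI hxc ↦ ?_)
  by_contra hx
  obtain ⟨s, ha0, ha⟩ := exists_leftAnnStable_mul_left hR hx
  have haI : s * x ∈ I := I.mul_mem_left s hxI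
  have hac : s * x ∈ Ideal.torsionOf R R c := Ideal.mul_mem_left _ s hxc
  refine hmax (J ⊔ Ideal.span {s * x})
    ⟨c + s * x, I.add_mem hcI haI, hc.add ha hac,
      hc.disjoint_sup_span_torsionOf_add ha hac hJ⟩ ?_
  refine left_lt_sup.2 fun hle ↦ ha0 ?_
  exact Submodule.disjoint_def.1 hJ _ (hle (Ideal.mem_span_singleton_self _)) hac

theorem isRegular_of_isRightRegular [IsNoetherianRing R] (hR : IsSemiprimeRing R) {c : R}
    (hc : IsRightRegular c) : IsRegular c := by
  refine ⟨isLeftRegular_iff_right_eq_zero_of_mul.2 fun y hy ↦ ?_, hc⟩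
  by_contra hy0
  obtain ⟨s, hz0, hz⟩ := exists_leftAnnStable_mul_right hR hy0
  have hess : IsEssential (LinearMap.toSpanSingleton R R c).range :=
    isEssential_range_of_injective hc
  have hdisj : Disjoint (LinearMap.toSpanSingleton R R c).range (Ideal.span {y * s}) := by
    rw [Submodule.disjoint_def]
    rintro _ ⟨w, rfl⟩ hw
    obtain ⟨t, ht⟩ := Ideal.mem_span_singleton'.1 hw
    have htz : t * (y * s) * (y * s) = 0 := by
      rw [ht, LinearMap.toSpanSingleton_apply, smul_eq_mul, mul_assoc, ← mul_assoc c, hy, zero_mul,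
        mul_zero]
    rw [← ht, hz t htz]
  exact hz0 (Ideal.span_singleton_eq_bot.1 (hess _ hdisj))

theorem exists_isRegular_mem_of_isEssential [IsNoetherianRing R] (hR : IsSemiprimeRing R)
    {I : Ideal R} (hI : IsEssential I) : ∃ c ∈ I, IsRegular c :=
  let ⟨c, hcI, hc⟩ := exists_isRightRegular_mem_of_isEssential hR hI
  ⟨c, hcI, isRegular_of_isRightRegular hR hc⟩

end Semiprime

section Prime

variable [Ring R] {P : TwoSidedIdeal R}

theorem isSemiprimeRing_of_isPrime_bot (h : (⊥ : TwoSidedIdeal R).IsPrime) : IsSemiprimeRing R :=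
  fun a ha ↦ or_self_iff.1 (h.2 a a ha)

theorem isEssential_of_isPrime_bot (h : (⊥ : TwoSidedIdeal R).IsPrime) {I : Ideal R}
    [I.IsTwoSided] (hI : I ≠ ⊥) : IsEssential I := by
  intro L hL
  obtain ⟨i, hiI, hi⟩ := Submodule.exists_mem_ne_zero_of_ne_bot hI
  refine (Submodule.eq_bot_iff _).2 fun x hx ↦ ?_
  refine (h.2 i x fun r ↦ ?_).resolve_left hi
  exact Submodule.disjoint_def.1 hL _ (I.mul_mem_right x (I.mul_mem_right r hiI))
    (L.smul_mem _ hx)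

theorem ringCon_mk'_eq_zero_iff {r : R} : P.ringCon.mk' r = 0 ↔ r ∈ P := by
  rw [← TwoSidedIdeal.mem_ker, TwoSidedIdeal.ker_ringCon_mk']

theorem isPrime_bot_quotient (hP : P.IsPrime) :
    (⊥ : TwoSidedIdeal P.ringCon.Quotient).IsPrime := by
  refine ⟨fun h ↦ hP.1 (P.one_mem_iff.1 ?_), fun a b hab ↦ ?_⟩
  · rw [← ringCon_mk'_eq_zero_iff, map_one]
    exact (TwoSidedIdeal.one_mem_iff _).2 h
  · obtain ⟨a, rfl⟩ := P.ringCon.mk'_surjective a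
    obtain ⟨b, rfl⟩ := P.ringCon.mk'_surjective b
    simp only [TwoSidedIdeal.mem_bot, ringCon_mk'_eq_zero_iff] at hab ⊢
    refine hP.2 a b fun r ↦ ?_
    simpa only [← map_mul, ringCon_mk'_eq_zero_iff] using hab (P.ringCon.mk' r)

theorem regularMod_of_isRegular_mk' {g : R} (hg : IsRegular (P.ringCon.mk' g)) :
    RegularMod P g := by
  simp only [isRegular_iff_eq_zero_of_mul, P.ringCon.mk'_surjective.forall, ← map_mul,
    ringCon_mk'_eq_zero_iff] at hg
  exact hg

theorem exists_regularMod_mem_of_not_le [IsNoetherianRing R] (hP : P.IsPrime)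
    {J : TwoSidedIdeal R} (hJ : ¬ J ≤ P) : ∃ g ∈ J, RegularMod P g := by
  let π := P.ringCon.mk'
  have hπ : Function.Surjective π := P.ringCon.mk'_surjective
  have : RingHomSurjective π := ⟨hπ⟩
  have : IsNoetherianRing P.ringCon.Quotient := isNoetherianRing_of_surjective _ _ π hπ
  have hbot := isPrime_bot_quotient hP
  have hmem (y) : y ∈ J.asIdeal.map π ↔ ∃ x ∈ J, π x = y := Ideal.mem_map_iff_of_surjective π hπ
  have hne : J.asIdeal.map π ≠ ⊥ := by
    intro h
    refine hJ fun x hx ↦ ringCon_mk'_eq_zero_iff.1 ?_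
    exact (Submodule.eq_bot_iff _).1 h _ (Ideal.mem_map_of_mem π hx)
  obtain ⟨c, hc, hreg⟩ := exists_isRegular_mem_of_isEssential
    (isSemiprimeRing_of_isPrime_bot hbot) (isEssential_of_isPrime_bot hbot hne)
  obtain ⟨g, hgJ, rfl⟩ := (hmem c).1 hc
  exact ⟨g, hgJ, regularMod_of_isRegular_mk' hreg⟩

theorem le_or_le_of_isPrime_of_inf_le (hP : P.IsPrime) {I J : TwoSidedIdeal R} (h : I ⊓ J ≤ P) :
    I ≤ P ∨ J ≤ P := by
  by_contra! hnle
  obtain ⟨x, hxI, hxP⟩ := SetLike.not_le_iff_exists.1 hnle.1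
  obtain ⟨y, hyJ, hyP⟩ := SetLike.not_le_iff_exists.1 hnle.2
  refine (hP.2 x y fun r ↦ h ?_).elim hxP hyP
  exact (TwoSidedIdeal.mem_inf R).2
    ⟨I.mul_mem_right _ _ (I.mul_mem_right _ _ hxI), J.mul_mem_left _ _ hyJ⟩

theorem exists_le_of_isPrime_of_finsetInf_le {ι : Type*} (hP : P.IsPrime) {s : Finset ι}
    {F : ι → TwoSidedIdeal R} (h : s.inf F ≤ P) : ∃ i ∈ s, F i ≤ P := by
  classical
  induction s using Finset.induction_on with
  | empty => exact absurd (top_le_iff.1 h) hP.1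
  | insert j s _ ih =>
    rw [Finset.inf_insert] at h
    rw [Finset.exists_mem_insert]
    exact (le_or_le_of_isPrime_of_inf_le hP h).imp_right ih

theorem mem_finsetInf {ι : Type*} {s : Finset ι} {F : ι → TwoSidedIdeal R} {x : R} :
    x ∈ s.inf F ↔ ∀ i ∈ s, x ∈ F i := by
  rw [Finset.inf_eq_sInf_image, TwoSidedIdeal.mem_sInf, Set.forall_mem_image]
  rfl

theorem exists_regularMod_forall_mul_mem_finsetInf [IsNoetherianRing R] {ι : Type*}
    (hP : P.IsPrime) {s : Finset ι} {F : ι → TwoSidedIdeal R} (hF : ∀ i ∈ s, F i ≤ P → F i = P) :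
    ∃ g, RegularMod P g ∧ ∀ f ∈ P, f * g ∈ s.inf F ∧ g * f ∈ s.inf F := by
  classical
  have hnle : ¬ {i ∈ s | F i ≠ P}.inf F ≤ P := by
    intro hle
    obtain ⟨i, hi, hiP⟩ := exists_le_of_isPrime_of_finsetInf_le hP hle
    rw [Finset.mem_filter] at hi
    exact hi.2 (hF i hi.1 hiP)
  obtain ⟨g, hgF, hg⟩ := exists_regularMod_mem_of_not_le hP hnle
  have hg_mem (i) (hi : i ∈ s) (hiP : F i ≠ P) : g ∈ F i :=
    mem_finsetInf.1 hgF i (Finset.mem_filter.2 ⟨hi, hiP⟩)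
  refine ⟨g, hg, fun f hf ↦ ⟨mem_finsetInf.2 fun i hi ↦ ?_, mem_finsetInf.2 fun i hi ↦ ?_⟩⟩
  · by_cases hiP : F i = P
    · exact hiP ▸ P.mul_mem_right _ _ hf
    · exact (F i).mul_mem_left _ _ (hg_mem i hi hiP)
  · by_cases hiP : F i = P
    · exact hiP ▸ P.mul_mem_left _ _ hf
    · exact (F i).mul_mem_right _ _ (hg_mem i hi hiP)

end Prime

section InvariantPart

theorem eq_of_map_le_of_isPeriodicPt {α : Type*} [PartialOrder α] {f : α → α} (hf : Monotone f)
    {x : α} (hx : f x ≤ x) {n : ℕ} (hn : 1 ≤ n) (hper : Function.IsPeriodicPt f n x) : f x = x :=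
  hx.antisymm <| calc
    x = f^[n] x := hper.eq.symm
    _ ≤ f^[1] x := hf.antitone_iterate_of_map_le hx hn

variable [Ring R] {σ : R ≃+* R} {n : ℕ}

theorem mapEquiv_mono (σ : R ≃+* R) : Monotone (TwoSidedIdeal.mapEquiv σ) :=
  σ.mapTwoSidedIdeal.monotone

theorem mapEquiv_pow (σ : R ≃+* R) (i : ℕ) :
    TwoSidedIdeal.mapEquiv (σ ^ i) = (TwoSidedIdeal.mapEquiv σ)^[i] := by
  induction i with
  | zero => rfl
  | succ i ih => rw [pow_succ, Function.iterate_succ, ← ih]; rfl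

theorem mapEquiv_pow_eq_of_le {P : TwoSidedIdeal R} (hn : 1 ≤ n)
    (hPn : TwoSidedIdeal.mapEquiv (σ ^ n) P = P) {i : ℕ}
    (hi : TwoSidedIdeal.mapEquiv (σ ^ i) P ≤ P) : TwoSidedIdeal.mapEquiv (σ ^ i) P = P := by
  refine eq_of_map_le_of_isPeriodicPt (mapEquiv_mono _) hi hn ?_
  rw [mapEquiv_pow] at hPn ⊢
  exact Function.IsPeriodicPt.iterate hPn i

/-- The intersection `I⁰ = I ∩ σ(I) ∩ ⋯ ∩ σⁿ⁻¹(I)`, which is the `σ`-invariant part of `I` when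
`σⁿ(I) = I`. -/
def invariantPart (σ : R ≃+* R) (n : ℕ) (I : TwoSidedIdeal R) : TwoSidedIdeal R :=
  ⨅ i ∈ Finset.range n, TwoSidedIdeal.mapEquiv (σ ^ i) I

theorem invariantPart_mono (σ : R ≃+* R) (n : ℕ) : Monotone (invariantPart σ n) :=
  fun _ _ h ↦ iInf₂_mono fun _ _ ↦ mapEquiv_mono _ h

theorem invariantPart_le (hn : 1 ≤ n) (I : TwoSidedIdeal R) : invariantPart σ n I ≤ I :=
  iInf₂_le 0 (Finset.mem_range.2 hn)

theorem exists_regularMod_forall_mul_mem_invariantPart [IsNoetherianRing R] {P : TwoSidedIdeal R}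
    (hP : P.IsPrime) (hn : 1 ≤ n) (hPn : TwoSidedIdeal.mapEquiv (σ ^ n) P = P) :
    ∃ g, RegularMod P g ∧
      ∀ f ∈ P, f * g ∈ invariantPart σ n P ∧ g * f ∈ invariantPart σ n P := by
  simp only [invariantPart, ← Finset.inf_eq_iInf]
  exact exists_regularMod_forall_mul_mem_finsetInf hP fun _ _ ↦ mapEquiv_pow_eq_of_le hn hPn

theorem invariant_part_strictly_smaller_general [IsNoetherianRing R] {Q P A : TwoSidedIdeal R}
    (hQ : Q.IsPrime) (hP : P.IsPrime) (hA : A < Q ⊓ P)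
    (htf : ∀ f ∈ Q ⊓ P, f ∉ A →
      (∀ g : R, RegularMod P g → f * g ∉ A) ∧ (∀ g : R, RegularMod Q g → g * f ∉ A))
    (hn : 1 ≤ n) (hQn : TwoSidedIdeal.mapEquiv (σ ^ n) Q = Q)
    (hPn : TwoSidedIdeal.mapEquiv (σ ^ n) P = P) :
    invariantPart σ n A < invariantPart σ n Q ⊓ invariantPart σ n P := by
  have hle : invariantPart σ n A ≤ invariantPart σ n Q ⊓ invariantPart σ n P :=
    le_inf (invariantPart_mono σ n (hA.le.trans inf_le_left))
      (invariantPart_mono σ n (hA.le.trans inf_le_right))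
  obtain ⟨f, hf, hfA⟩ := SetLike.exists_of_lt hA
  obtain ⟨hfQ, hfP⟩ := (TwoSidedIdeal.mem_inf R).1 hf
  obtain ⟨g, hg, hgQ⟩ := exists_regularMod_forall_mul_mem_invariantPart hQ hn hQn
  obtain ⟨k, hk, hkP⟩ := exists_regularMod_forall_mul_mem_invariantPart hP hn hPn
  have hgf : g * f ∉ A := (htf f hf hfA).2 g hg
  have hgfk : g * f * k ∉ A := (htf _ ((Q ⊓ P).mul_mem_left _ _ hf) hgf).1 k hk
  refine hle.lt_of_not_ge fun hge ↦ hgfk (invariantPart_le hn A (hge ?_))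
  exact (TwoSidedIdeal.mem_inf R).2 ⟨TwoSidedIdeal.mul_mem_right _ _ _ (hgQ f hfQ).2,
    (hkP _ (P.mul_mem_left _ _ hfP)).1⟩

end InvariantPart

/-- for a link `Q ⇝ P` via `A` with `σⁿ(Q)=Q`, `σⁿ(P)=P`, `σⁿ(A)=A`, the
σ-invariant part `A⁰` is strictly contained in `Q⁰ ∩ P⁰`. -/
theorem invariant_part_strictly_smaller [Ring R] [IsNoetherianRing R] [IsNoetherianRing Rᵐᵒᵖ]
    (σ : R ≃+* R) (Q P A : TwoSidedIdeal R) (hQ : Q.IsPrime) (hP : P.IsPrime)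
    (h : LinkVia Q P A) (n : ℕ) (hn : 1 ≤ n)
    (hQn : TwoSidedIdeal.mapEquiv (σ ^ n) Q = Q)
    (hPn : TwoSidedIdeal.mapEquiv (σ ^ n) P = P)
    (hAn : TwoSidedIdeal.mapEquiv (σ ^ n) A = A)
    (Q0 P0 A0 : TwoSidedIdeal R)
    (hQ0 : Q0 = ⨅ i ∈ Finset.range n, TwoSidedIdeal.mapEquiv (σ ^ i) Q)
    (hP0 : P0 = ⨅ i ∈ Finset.range n, TwoSidedIdeal.mapEquiv (σ ^ i) P)
    (hA0 : A0 = ⨅ i ∈ Finset.range n, TwoSidedIdeal.mapEquiv (σ ^ i) A) :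
    A0 < Q0 ⊓ P0 := by
  subst hQ0 hP0 hA0
  exact invariant_part_strictly_smaller_general hQ hP h.2.1 h.2.2 hn hQn hPn
end

section
/- Let R be a Noetherian ring with a ring automorphism σ, and let Q and P be σ-semistable prime ideals of R, with σ-invariant parts Q⁰ and P⁰ (taken with respect to a common integer n ≥ 1 satisfying σⁿ(Q) = Q and σⁿ(P) = P). If there is a link Q⁰ ⇝ P⁰ (i.e., there is an ideal A with Q⁰·P⁰ ⊆ A ⊊ Q⁰ ∩ P⁰ such that (Q⁰ ∩ P⁰)/A is torsionfree as a right R/P⁰-module and as a left R/Q⁰-module), then for every integer i ≥ 0 there exists an integer j ≥ 0 such that there is a link σⁱ(Q) ⇝ σʲ(P) of prime ideals. -/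
variable {R : Type*}

/-!
An ideal `Q⁰` that is a finite intersection of primes may be written as an irredundant
intersection `X ∩ T` with `T` one of the primes and `X` the intersection of the others. If
`Q⁰ ⇝ P` via `A`, then some such `X` does not kill `(Q⁰ ∩ P)/A` on the left: otherwise the
annihilator of an element would be essential modulo `Q⁰`, hence by Goldie's theorem would contain
a regular element. For this `X` the ideal `{z ∈ T ∩ P | X z ⊆ A}` gives a link `T ⇝ P`. Its
torsionfreeness over `R/T` reduces to that of `A` over `R/Q⁰` because `X g` is, modulo `Q⁰`,
essential in `X` whenever `g` is regular modulo `T`. The right-hand ideal is treated in the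
opposite ring, and applying a power of `σ` to a link `σᵃ(Q) ⇝ σᵇ(P)` moves its source to any
prescribed `σⁱ(Q)`.
-/

/-- A two-sided ideal `I` is semiprime: `a R a ⊆ I` implies `a ∈ I`. A semiprime ring is one whose
ideal `⊥` is semiprime. -/
def IsSemiprimeIdeal [Ring R] (I : TwoSidedIdeal R) : Prop :=
  ∀ a : R, (∀ r : R, a * r * a ∈ I) → a ∈ I

/-- The image of the left ideal `E` in `R/I` is an essential left ideal, expressed elementwise:
every nonzero element of `R/I` has a nonzero left multiple represented by an element of `E`.
Essential left ideals of `R` itself are the case `I = ⊥`. -/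
def IsEssentialMod [Ring R] (I : TwoSidedIdeal R) (E : Ideal R) : Prop :=
  ∀ s ∉ I, ∃ r : R, r * s ∉ I ∧ r * s ∈ E

/-- The left annihilator `{x | x * a = 0}` of an element `a`. -/
def leftAnnihilator [Ring R] (a : R) : Ideal R :=
  Ideal.torsionOf R R a

/-- The two-sided ideal `{z | X z ⊆ A}`. -/
def leftColon [Ring R] (A X : TwoSidedIdeal R) : TwoSidedIdeal R :=
  .mk' {z | ∀ x ∈ X, x * z ∈ A}
    (fun x _ => by simpa only [mul_zero] using A.zero_mem)
    (fun {y z} hy hz x hx => by simpa only [mul_add] using A.add_mem (hy x hx) (hz x hx))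
    (fun {z} hz x hx => by simpa only [mul_neg] using A.neg_mem (hz x hx))
    (fun {r z} hz x hx => by simpa only [mul_assoc] using hz (x * r) (X.mul_mem_right x r hx))
    (fun {z r} hz x hx => by simpa only [mul_assoc] using A.mul_mem_right _ r (hz x hx))

section Goldie

variable [Ring R]

theorem mem_leftAnnihilator {a x : R} : x ∈ leftAnnihilator a ↔ x * a = 0 :=
  Iff.rfl

theorem leftAnnihilator_le_leftAnnihilator_mul (a b : R) :
    leftAnnihilator a ≤ leftAnnihilator (a * b) := fun x hx => by
  rw [mem_leftAnnihilator] at *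
  rw [← mul_assoc, hx, zero_mul]

theorem IsEssentialMod.mono {I : TwoSidedIdeal R} {E F : Ideal R} (hE : IsEssentialMod I E)
    (hEF : E ≤ F) : IsEssentialMod I F := fun s hs =>
  let ⟨r, hrI, hrE⟩ := hE s hs
  ⟨r, hrI, hEF hrE⟩

theorem IsEssentialMod.leftAnnihilator_mul {a : R}
    (ha : IsEssentialMod ⊥ (leftAnnihilator a)) (r : R) :
    IsEssentialMod ⊥ (leftAnnihilator (r * a)) := by
  intro s hs
  by_cases hsr : s * r = 0
  · exact ⟨1, by rwa [one_mul], by rw [mem_leftAnnihilator, one_mul, ← mul_assoc, hsr, zero_mul]⟩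
  · obtain ⟨t, ht_ne, ht_ann⟩ := ha (s * r) hsr
    refine ⟨t, fun hts => ht_ne ?_, ?_⟩
    · rw [TwoSidedIdeal.mem_bot] at *
      rw [← mul_assoc, hts, zero_mul]
    · simpa only [mem_leftAnnihilator, mul_assoc] using ht_ann

theorem IsEssentialMod.inf_ne_bot {E I : Ideal R} (hE : IsEssentialMod ⊥ E) (hI : I ≠ ⊥) :
    I ⊓ E ≠ ⊥ := by
  obtain ⟨s, hsI, hs⟩ := Submodule.exists_mem_ne_zero_of_ne_bot hI
  obtain ⟨r, hrs, hrsE⟩ := hE s hs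
  exact Submodule.ne_bot_iff _ |>.mpr ⟨r * s, ⟨I.mul_mem_left r hsI, hrsE⟩, hrs⟩

theorem leftAnnihilator_add {c e : R} (hc : Disjoint (leftAnnihilator c) (Ideal.span {c}))
    (hec : e * c = 0) : leftAnnihilator (c + e) = leftAnnihilator c ⊓ leftAnnihilator e := by
  ext x
  simp only [Submodule.mem_inf, mem_leftAnnihilator, mul_add]
  refine ⟨fun hx => ?_, fun ⟨hxc, hxe⟩ => by rw [hxc, hxe, add_zero]⟩
  have hxcc : x * c * c = 0 := by
    have := congrArg (· * c) hx
    simpa only [add_mul, mul_assoc x e c, hec, mul_zero, add_zero, zero_mul] using this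
  have hxc : x * c = 0 :=
    Submodule.disjoint_def.mp hc _ hxcc (Ideal.mem_span_singleton'.mpr ⟨x, rfl⟩)
  exact ⟨hxc, by rwa [hxc, zero_add] at hx⟩

theorem isNilpotent_mul_swap {a b : R} (h : IsNilpotent (a * b)) : IsNilpotent (b * a) := by
  obtain ⟨k, hk⟩ := h
  exact ⟨k + 1, by rw [pow_succ, ← mul_assoc, mul_pow_mul, hk, mul_zero, zero_mul]⟩

variable [IsNoetherianRing R]

-- If `R g ∩ R s = 0` then `R × R s` embeds into `R` by `(a, b) ↦ a g + b`, so `R s = 0`.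
theorem isEssentialMod_bot_span_singleton {g : R} (hg : leftAnnihilator g = ⊥) :
    IsEssentialMod ⊥ (Ideal.span {g}) := by
  intro s hs
  by_contra! hdisj
  let φ : R × (Ideal.span {s} : Ideal R) →ₗ[R] R :=
    (LinearMap.toSpanSingleton R R g).coprod (Submodule.subtype _)
  have hφ : Function.Injective φ := by
    rw [injective_iff_map_eq_zero]
    rintro ⟨a, b, hb⟩ hab
    obtain ⟨r, rfl⟩ := Ideal.mem_span_singleton'.mp hb
    replace hab : a * g + r * s = 0 := by simpa [φ] using hab
    have hrs : r * s = 0 := by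
      by_contra hne
      exact hdisj r hne (Ideal.mem_span_singleton'.mpr
        ⟨-a, by rw [neg_mul, eq_neg_of_add_eq_zero_right hab]⟩)
    have ha : a ∈ leftAnnihilator g := by rwa [hrs, add_zero] at hab
    rw [hg, Ideal.mem_bot] at ha
    simp [ha, hrs]
  have := IsNoetherian.subsingleton_of_prod_injective φ hφ
  have hspan : (Ideal.span {s} : Ideal R) = ⊥ := Submodule.subsingleton_iff_eq_bot.mp this
  exact hs (Ideal.span_singleton_eq_bot.mp hspan)

theorem eq_zero_of_isEssentialMod_leftAnnihilator (hR : IsSemiprimeIdeal (⊥ : TwoSidedIdeal R))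
    {z : R} (hz : IsEssentialMod ⊥ (leftAnnihilator z)) : z = 0 := by
  by_contra hz_ne
  obtain ⟨w, ⟨hw, hw_ne⟩, hmax⟩ := exists_maximalFor_of_wellFoundedGT
    (fun w : R => IsEssentialMod ⊥ (leftAnnihilator w) ∧ w ≠ 0) leftAnnihilator ⟨z, hz, hz_ne⟩
  refine hw_ne (hR w fun r => ?_)
  by_contra hwrw
  have hle : leftAnnihilator w ≤ leftAnnihilator (w * r * w) := by
    simpa only [mul_assoc] using leftAnnihilator_le_leftAnnihilator_mul w (r * w)
  obtain ⟨t, htw, ht⟩ := hw.leftAnnihilator_mul r w hw_ne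
  exact htw (hmax ⟨hw.mono hle, hwrw⟩ hle
    (by simpa only [mem_leftAnnihilator, mul_assoc] using ht))

theorem eq_zero_of_forall_isNilpotent_mul (hR : IsSemiprimeIdeal (⊥ : TwoSidedIdeal R))
    {a : R} (ha : ∀ r, IsNilpotent (a * r)) : a = 0 := by
  by_contra ha_ne
  obtain ⟨b, ⟨hb, hb_ne⟩, hmax⟩ := exists_maximalFor_of_wellFoundedGT
    (fun b : R => (∀ r, IsNilpotent (b * r)) ∧ b ≠ 0) leftAnnihilator ⟨a, ha, ha_ne⟩
  refine hb_ne (hR b fun r => ?_)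
  by_contra hbrb
  have hpow_ne : ∀ k, (b * r) ^ (k + 1) ≠ 0 := by
    intro k
    induction k with
    | zero =>
      rw [zero_add, pow_one]
      exact fun hbr => hbrb (by rw [hbr, zero_mul]; rfl)
    | succ k ih =>
      intro hk
      have hfactor : (b * r) ^ (k + 1) = b * (r * (b * r) ^ k) := by rw [pow_succ', mul_assoc]
      have hle : leftAnnihilator b ≤ leftAnnihilator ((b * r) ^ (k + 1)) :=
        hfactor ▸ leftAnnihilator_le_leftAnnihilator_mul _ _
      refine hbrb (hmax ⟨fun s => ?_, ih⟩ hle ?_)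
      · rw [hfactor, mul_assoc]
        exact hb _
      · rwa [pow_succ'] at hk
  obtain ⟨k, hk⟩ := hb r
  exact hpow_ne k (by rw [pow_succ, hk, zero_mul])

theorem exists_not_isNilpotent_mem (hR : IsSemiprimeIdeal (⊥ : TwoSidedIdeal R)) {I : Ideal R}
    (hI : I ≠ ⊥) : ∃ b ∈ I, ¬ IsNilpotent b := by
  by_contra! hnil
  obtain ⟨a, haI, ha⟩ := Submodule.exists_mem_ne_zero_of_ne_bot hI
  exact ha (eq_zero_of_forall_isNilpotent_mul hR fun r =>
    isNilpotent_mul_swap (hnil (r * a) (I.mul_mem_left r haI)))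

-- A high power of a non-nilpotent element, by Fitting's lemma for right multiplication.
theorem exists_ne_zero_mem_disjoint_leftAnnihilator_span
    (hR : IsSemiprimeIdeal (⊥ : TwoSidedIdeal R)) {I : Ideal R} (hI : I ≠ ⊥) :
    ∃ e ∈ I, e ≠ 0 ∧ Disjoint (leftAnnihilator e) (Ideal.span {e}) := by
  obtain ⟨b, hbI, hb⟩ := exists_not_isNilpotent_mem hR hI
  obtain ⟨k, hdisj, hk⟩ :=
    ((Module.End.eventually_disjoint_ker_pow_range_pow
      (RingEquiv.moduleEndSelf R (.op b))).and (Filter.eventually_ge_atTop 1)).exists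
  rw [← map_pow, ← MulOpposite.op_pow] at hdisj
  refine ⟨b ^ k, I.pow_mem_of_mem hbI k hk, fun hbk => hb ⟨k, hbk⟩, ?_⟩
  refine hdisj.mono le_rfl fun x hx => ?_
  obtain ⟨r, rfl⟩ := Ideal.mem_span_singleton'.mp hx
  exact ⟨r, rfl⟩

-- Take `N` maximal among left ideals meeting the left annihilator of some `c ∈ N ∩ E` trivially. If
-- `c` had nonzero left annihilator, an `e` in it would enlarge `(N, c)` to `(R e + N, c + e)`.
theorem exists_mem_leftAnnihilator_eq_bot (hR : IsSemiprimeIdeal (⊥ : TwoSidedIdeal R))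
    {E : Ideal R} (hE : IsEssentialMod ⊥ E) : ∃ c ∈ E, leftAnnihilator c = ⊥ := by
  obtain ⟨N, ⟨c, ⟨hcN, hcE⟩, hNc⟩, hmax⟩ := exists_maximal_of_wellFoundedGT
    (fun N : Ideal R => ∃ c ∈ N ⊓ E, Disjoint N (leftAnnihilator c))
    ⟨⊥, 0, zero_mem _, disjoint_bot_left⟩
  refine ⟨c, hcE, ?_⟩
  by_contra hc
  obtain ⟨e, ⟨hec, heE⟩, he_ne, he⟩ := exists_ne_zero_mem_disjoint_leftAnnihilator_span hR
    (hE.inf_ne_bot hc)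
  have hann : leftAnnihilator (c + e) = leftAnnihilator c ⊓ leftAnnihilator e :=
    leftAnnihilator_add (hNc.symm.mono_right ((Ideal.span_singleton_le_iff_mem N).mpr hcN)) hec
  have hmodular : (Ideal.span {e} ⊔ N) ⊓ leftAnnihilator c = Ideal.span {e} := by
    rw [sup_inf_assoc_of_le N ((Ideal.span_singleton_le_iff_mem _).mpr hec), hNc.eq_bot,
      sup_bot_eq]
  have hdisj : Disjoint (Ideal.span {e} ⊔ N) (leftAnnihilator (c + e)) := by
    rw [disjoint_iff, hann, ← inf_assoc, hmodular, he.symm.eq_bot]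
  have he_mem : e ∈ Ideal.span {e} ⊔ N := Ideal.mem_sup_left (Ideal.mem_span_singleton_self e)
  have heN : e ∈ N :=
    hmax ⟨c + e, ⟨add_mem (Ideal.mem_sup_right hcN) he_mem, add_mem hcE heE⟩, hdisj⟩
      le_sup_right he_mem
  exact he_ne (Submodule.disjoint_def.mp hNc e heN hec)

/-- **Goldie's theorem** for semiprime left Noetherian rings. -/
theorem exists_mem_regularMod_bot (hR : IsSemiprimeIdeal (⊥ : TwoSidedIdeal R))
    {E : Ideal R} (hE : IsEssentialMod ⊥ E) : ∃ c ∈ E, RegularMod ⊥ c := by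
  obtain ⟨c, hcE, hc⟩ := exists_mem_leftAnnihilator_eq_bot hR hE
  refine ⟨c, hcE, fun y hcy => ?_, fun y hyc => ?_⟩
  · refine eq_zero_of_isEssentialMod_leftAnnihilator hR
      ((isEssentialMod_bot_span_singleton hc).mono ?_)
    rwa [Ideal.span_singleton_le_iff_mem]
  · have : y ∈ leftAnnihilator c := hyc
    rwa [hc] at this

end Goldie

section Quotient

variable [Ring R] {S : Type*} [Ring S] {F : Type*} [FunLike F R S] [RingHomClass F R S] {f : F}

theorem regularMod_comap_iff (hf : Function.Surjective f) {J : TwoSidedIdeal S} {g : R} :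
    RegularMod (J.comap f) g ↔ RegularMod J (f g) := by
  simp only [RegularMod, TwoSidedIdeal.mem_comap, map_mul, hf.forall]

theorem isPrime_comap_iff (hf : Function.Surjective f) {J : TwoSidedIdeal S} :
    (J.comap f).IsPrime ↔ J.IsPrime := by
  simp only [TwoSidedIdeal.IsPrime, Ne, ← TwoSidedIdeal.one_mem_iff, TwoSidedIdeal.mem_comap,
    map_mul, map_one, hf.forall]

theorem isSemiprimeIdeal_comap_iff (hf : Function.Surjective f) {J : TwoSidedIdeal S} :
    IsSemiprimeIdeal (J.comap f) ↔ IsSemiprimeIdeal J := by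
  simp only [IsSemiprimeIdeal, TwoSidedIdeal.mem_comap, map_mul, hf.forall]

theorem linkVia_comap_iff (hf : Function.Surjective f) {Q P A : TwoSidedIdeal S} :
    LinkVia (Q.comap f) (P.comap f) (A.comap f) ↔ LinkVia Q P A := by
  simp only [LinkVia, SetLike.lt_iff_le_and_exists, SetLike.le_def, TwoSidedIdeal.mem_inf,
    TwoSidedIdeal.mem_comap, regularMod_comap_iff hf, map_mul, hf.forall, hf.exists]

theorem IsEssentialMod.map (hf : Function.Surjective f) {J : TwoSidedIdeal S} {E : Ideal R}
    (hE : IsEssentialMod (J.comap f) E) : IsEssentialMod J (E.map f) := by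
  intro s hs
  obtain ⟨s, rfl⟩ := hf s
  obtain ⟨r, hrs, hrsE⟩ := hE s (by rwa [TwoSidedIdeal.mem_comap])
  rw [TwoSidedIdeal.mem_comap] at hrs
  exact ⟨f r, by rwa [← map_mul], by rw [← map_mul]; exact Ideal.mem_map_of_mem f hrsE⟩

theorem comap_mk_bot (I : TwoSidedIdeal R) : (⊥ : TwoSidedIdeal _).comap I.ringCon.mk' = I :=
  I.ker_ringCon_mk'

variable [IsNoetherianRing R]

instance isNoetherianRing_ringCon_quotient (I : TwoSidedIdeal R) :
    IsNoetherianRing I.ringCon.Quotient :=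
  isNoetherianRing_of_surjective R _ I.ringCon.mk' I.ringCon.mk'_surjective

theorem exists_mem_regularMod {I : TwoSidedIdeal R} (hI : IsSemiprimeIdeal I) {E : Ideal R}
    (hE : IsEssentialMod I E) : ∃ c ∈ E, RegularMod I c := by
  have hmk := I.ringCon.mk'_surjective
  rw [← comap_mk_bot I] at hI hE
  obtain ⟨c', hc'E, hc'⟩ :=
    exists_mem_regularMod_bot ((isSemiprimeIdeal_comap_iff hmk).mp hI) (hE.map hmk)
  obtain ⟨c, hcE, rfl⟩ := (Ideal.mem_map_iff_of_surjective _ hmk).mp hc'E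
  exact ⟨c, hcE, by rwa [← comap_mk_bot I, regularMod_comap_iff hmk]⟩

theorem RegularMod.exists_mul_sub_mul_mem {T : TwoSidedIdeal R} {g : R} (hg : RegularMod T g)
    {s : R} (hs : s ∉ T) : ∃ r u, r * s ∉ T ∧ r * s - u * g ∈ T := by
  have hmk := T.ringCon.mk'_surjective
  rw [← comap_mk_bot T] at hs ⊢
  rw [← comap_mk_bot T, regularMod_comap_iff hmk] at hg
  have hann : leftAnnihilator (T.ringCon.mk' g) = ⊥ := eq_bot_iff.mpr hg.2
  obtain ⟨r', hr's, hr'g⟩ := isEssentialMod_bot_span_singleton hann _ hs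
  obtain ⟨u', hu'⟩ := Ideal.mem_span_singleton'.mp hr'g
  obtain ⟨r, rfl⟩ := hmk r'
  obtain ⟨u, rfl⟩ := hmk u'
  refine ⟨r, u, ?_, ?_⟩
  · rwa [TwoSidedIdeal.mem_comap, map_mul]
  · rw [TwoSidedIdeal.mem_comap, map_sub, map_mul, map_mul, hu', sub_self]
    exact TwoSidedIdeal.zero_mem _

end Quotient

section Prime

variable [Ring R] {ι : Type*} {s : Finset ι} {T : ι → TwoSidedIdeal R}

theorem exists_mul_not_mem_of_isPrime {T X : TwoSidedIdeal R} (hT : T.IsPrime) (hXT : ¬ X ≤ T)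
    {u : R} (hu : u ∉ T) : ∃ x ∈ X, x * u ∉ T := by
  by_contra! hmem
  exact hXT fun x hx => (hT.2 x u fun r => hmem _ (X.mul_mem_right x r hx)).resolve_right hu

theorem mem_biInf_finset {x : R} : x ∈ ⨅ i ∈ s, T i ↔ ∀ i ∈ s, x ∈ T i := by
  rw [TwoSidedIdeal.mem_iInf]
  refine forall_congr' fun i => ?_
  by_cases hi : i ∈ s <;> simp [hi, TwoSidedIdeal.mem_top]

theorem isSemiprimeIdeal_biInf (hT : ∀ i ∈ s, (T i).IsPrime) :
    IsSemiprimeIdeal (⨅ i ∈ s, T i) := fun a ha =>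
  mem_biInf_finset.mpr fun i hi =>
    or_self_iff.mp ((hT i hi).2 a a fun r => mem_biInf_finset.mp (ha r) i hi)

theorem biInf_eq_biInf_erase_inf [DecidableEq ι] {i : ι} (hi : i ∈ s) :
    ⨅ k ∈ s, T k = (⨅ k ∈ s.erase i, T k) ⊓ T i := by
  rw [inf_comm, ← Finset.iInf_insert, Finset.insert_erase hi]

variable [IsNoetherianRing R]

theorem RegularMod.exists_regularMod_mul_sub_mul_mem {T X : TwoSidedIdeal R} (hT : T.IsPrime)
    (hXT : ¬ X ≤ T) (hsemi : IsSemiprimeIdeal (X ⊓ T)) {g : R} (hg : RegularMod T g)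
    {x : R} (hx : x ∈ X) :
    ∃ c, RegularMod (X ⊓ T) c ∧ ∃ u ∈ X, c * x - u * g ∈ X ⊓ T := by
  let E : Ideal R :=
    Submodule.comap (LinearMap.toSpanSingleton R R x)
      (Submodule.map (LinearMap.toSpanSingleton R R g) X.asIdeal ⊔ (X ⊓ T).asIdeal)
  have mem_E {c : R} : c ∈ E ↔ ∃ u ∈ X, c * x - u * g ∈ X ⊓ T := by
    simp [E, Submodule.mem_sup, ← eq_sub_iff_add_eq']
  suffices hE : IsEssentialMod (X ⊓ T) E by
    obtain ⟨c, hcE, hc⟩ := exists_mem_regularMod hsemi hE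
    exact ⟨c, hc, mem_E.mp hcE⟩
  intro s hs
  simp only [mem_E]
  by_cases hsx : s * x ∈ T
  · refine ⟨1, by rwa [one_mul], 0, X.zero_mem, ?_⟩
    rw [one_mul, zero_mul, sub_zero]
    exact TwoSidedIdeal.mem_inf R |>.mpr ⟨X.mul_mem_left s x hx, hsx⟩
  · obtain ⟨r, u, hrsx, hru⟩ := hg.exists_mul_sub_mul_mem hsx
    have hu : u ∉ T := fun hu => hrsx (by simpa using T.add_mem hru (T.mul_mem_right u g hu))
    obtain ⟨y, hy, hyu⟩ := exists_mul_not_mem_of_isPrime hT hXT hu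
    have hdiff : y * r * s * x - y * u * g ∈ X ⊓ T := by
      rw [show y * r * s * x - y * u * g = y * (r * (s * x) - u * g) by noncomm_ring,
        TwoSidedIdeal.mem_inf]
      exact ⟨X.mul_mem_right _ _ hy, T.mul_mem_left _ _ hru⟩
    refine ⟨y * r, fun hyrs => hyu (hg.2 _ ?_), y * u, X.mul_mem_right _ _ hy, hdiff⟩
    rw [TwoSidedIdeal.mem_inf] at hyrs hdiff
    simpa using T.sub_mem (T.mul_mem_right _ x hyrs.2) hdiff.2

end Prime

section Link

variable [Ring R] {Q P A : TwoSidedIdeal R} {ι : Type*} {s : Finset ι} {T : ι → TwoSidedIdeal R}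

theorem mem_leftColon {X : TwoSidedIdeal R} {z : R} :
    z ∈ leftColon A X ↔ ∀ x ∈ X, x * z ∈ A :=
  TwoSidedIdeal.mem_mk' ..

theorem LinkVia.leftColon_inf [IsNoetherianRing R] {X T : TwoSidedIdeal R} (hT : T.IsPrime)
    (hXT : ¬ X ≤ T) (hsemi : IsSemiprimeIdeal (X ⊓ T)) (h : LinkVia (X ⊓ T) P A)
    (hXA : ∃ f ∈ X ⊓ T ⊓ P, f ∉ leftColon A X) :
    LinkVia T P (leftColon A X ⊓ (T ⊓ P)) := by
  obtain ⟨hmul, -, htf⟩ := h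
  have mul_mem_inf {x t : R} (hx : x ∈ X) (ht : t ∈ T) : x * t ∈ X ⊓ T :=
    TwoSidedIdeal.mem_inf R |>.mpr ⟨X.mul_mem_right x t hx, T.mul_mem_left x t ht⟩
  refine ⟨fun t ht p hp => ?_, lt_of_le_not_ge inf_le_right fun hge => ?_, fun z hz hzB => ?_⟩
  · simp only [TwoSidedIdeal.mem_inf, mem_leftColon]
    refine ⟨fun x hx => ?_, T.mul_mem_right t p ht, P.mul_mem_left t p hp⟩
    rw [← mul_assoc]
    exact hmul _ (mul_mem_inf hx ht) p hp
  · obtain ⟨f, hf, hfX⟩ := hXA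
    exact hfX (inf_le_left (a := leftColon A X) (hge (inf_le_inf_right P inf_le_right hf)))
  · have hzTP := TwoSidedIdeal.mem_inf R |>.mp hz
    obtain ⟨x, hx, hxz⟩ : ∃ x ∈ X, x * z ∉ A := by
      by_contra! hXz
      exact hzB (TwoSidedIdeal.mem_inf R |>.mpr ⟨mem_leftColon.mpr hXz, hz⟩)
    have hxz_mem : x * z ∈ X ⊓ T ⊓ P :=
      TwoSidedIdeal.mem_inf R |>.mpr ⟨mul_mem_inf hx hzTP.1, P.mul_mem_left x z hzTP.2⟩
    obtain ⟨htf_right, htf_left⟩ := htf _ hxz_mem hxz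
    refine ⟨fun g hg hzg => htf_right g hg ?_, fun g hg hgz => ?_⟩
    · rw [mul_assoc]
      exact mem_leftColon.mp (TwoSidedIdeal.mem_inf R |>.mp hzg).1 x hx
    · obtain ⟨c, hc, u, hu, hcu⟩ := hg.exists_regularMod_mul_sub_mul_mem hT hXT hsemi hx
      have hugz : u * (g * z) ∈ A := mem_leftColon.mp (TwoSidedIdeal.mem_inf R |>.mp hgz).1 u hu
      have hcxz : (c * x - u * g) * z ∈ A := hmul _ hcu z hzTP.2
      refine htf_left c hc ?_
      rw [show c * (x * z) = (c * x - u * g) * z + u * (g * z) by noncomm_ring]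
      exact A.add_mem hcxz hugz

theorem LinkVia.exists_not_mem_leftColon [IsNoetherianRing R] [DecidableEq ι]
    (hT : ∀ i ∈ s, (T i).IsPrime) (hirr : ∀ i ∈ s, ¬ ⨅ k ∈ s.erase i, T k ≤ T i)
    (h : LinkVia (⨅ i ∈ s, T i) P A) :
    ∃ i ∈ s, ∃ f ∈ (⨅ i ∈ s, T i) ⊓ P, f ∉ leftColon A (⨅ k ∈ s.erase i, T k) := by
  obtain ⟨-, hlt, htf⟩ := h
  obtain ⟨f, hf, hfA⟩ := SetLike.exists_of_lt hlt
  by_contra! hcolon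
  let E : Ideal R := Submodule.comap (LinearMap.toSpanSingleton R R f) A.asIdeal
  have hE : IsEssentialMod (⨅ i ∈ s, T i) E := by
    intro r hr
    obtain ⟨i, hi, hri⟩ : ∃ i ∈ s, r ∉ T i := by simpa [mem_biInf_finset] using hr
    obtain ⟨x, hx, hxr⟩ := exists_mul_not_mem_of_isPrime (hT i hi) (hirr i hi) hri
    refine ⟨x, fun hmem => hxr (mem_biInf_finset.mp hmem i hi), ?_⟩
    exact mem_leftColon.mp (hcolon i hi f hf) _ (TwoSidedIdeal.mul_mem_right _ x r hx)
  obtain ⟨c, hcE, hc⟩ := exists_mem_regularMod (isSemiprimeIdeal_biInf hT) hE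
  exact (htf f hf hfA).2 c hc hcE

theorem LinkVia.exists_linkVia_left [IsNoetherianRing R] (hT : ∀ i ∈ s, (T i).IsPrime)
    (h : LinkVia (⨅ i ∈ s, T i) P A) : ∃ i ∈ s, ∃ B, LinkVia (T i) P B := by
  classical
  induction s using Finset.strongInduction with
  | H s ih =>
    by_cases hirr : ∀ i ∈ s, ¬ ⨅ k ∈ s.erase i, T k ≤ T i
    · obtain ⟨i, hi, hcolon⟩ := h.exists_not_mem_leftColon hT hirr
      have hsemi := isSemiprimeIdeal_biInf hT
      rw [biInf_eq_biInf_erase_inf hi] at h hcolon hsemi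
      exact ⟨i, hi, _, h.leftColon_inf (hT i hi) (hirr i hi) hsemi hcolon⟩
    · push Not at hirr
      obtain ⟨i, hi, hle⟩ := hirr
      rw [biInf_eq_biInf_erase_inf hi, inf_eq_left.mpr hle] at h
      obtain ⟨j, hj, hlink⟩ :=
        ih _ (Finset.erase_ssubset hi) (fun k hk => hT k (Finset.mem_of_mem_erase hk)) h
      exact ⟨j, Finset.mem_of_mem_erase hj, hlink⟩

theorem regularMod_op_iff {I : TwoSidedIdeal R} {g : R} :
    RegularMod I.op (.op g) ↔ RegularMod I g := by
  simp only [RegularMod, MulOpposite.op_surjective.forall, ← MulOpposite.op_mul,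
    TwoSidedIdeal.mem_op_iff, MulOpposite.unop_op, and_comm]

theorem isPrime_op_iff {I : TwoSidedIdeal R} : I.op.IsPrime ↔ I.IsPrime := by
  simp only [TwoSidedIdeal.IsPrime, Ne, ← TwoSidedIdeal.one_mem_iff, ← MulOpposite.op_one,
    MulOpposite.op_surjective.forall, ← MulOpposite.op_mul, TwoSidedIdeal.mem_op_iff,
    MulOpposite.unop_op, ← mul_assoc]
  rw [forall_comm]
  simp only [or_comm]

theorem linkVia_op_iff : LinkVia P.op Q.op A.op ↔ LinkVia Q P A := by
  rw [LinkVia, LinkVia, inf_comm Q P]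
  simp only [SetLike.lt_iff_le_and_exists, SetLike.le_def, TwoSidedIdeal.mem_inf,
    MulOpposite.op_surjective.forall, MulOpposite.op_surjective.exists, ← MulOpposite.op_mul,
    TwoSidedIdeal.mem_op_iff, MulOpposite.unop_op, regularMod_op_iff]
  have mul_swap : (∀ p ∈ P, ∀ q ∈ Q, q * p ∈ A) ↔ ∀ q ∈ Q, ∀ p ∈ P, q * p ∈ A :=
    ⟨fun h q hq p hp => h p hp q hq, fun h p hp q hq => h q hq p hp⟩
  exact and_congr mul_swap (and_congr Iff.rfl (forall₃_congr fun _ _ _ => and_comm))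

theorem LinkVia.exists_linkVia_right [IsNoetherianRing Rᵐᵒᵖ] (hT : ∀ i ∈ s, (T i).IsPrime)
    (h : LinkVia Q (⨅ i ∈ s, T i) A) : ∃ i ∈ s, ∃ B, LinkVia Q (T i) B := by
  have hop : (⨅ i ∈ s, T i).op = ⨅ i ∈ s, (T i).op := by
    ext x
    simp only [TwoSidedIdeal.mem_op_iff, mem_biInf_finset]
  rw [← linkVia_op_iff, hop] at h
  obtain ⟨i, hi, B, hB⟩ := h.exists_linkVia_left fun i hi => isPrime_op_iff.mpr (hT i hi)
  exact ⟨i, hi, B.unop, linkVia_op_iff.mp hB⟩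

theorem LinkVia.mapEquiv (σ : R ≃+* R) (h : LinkVia Q P A) :
    LinkVia (Q.mapEquiv σ) (P.mapEquiv σ) (A.mapEquiv σ) :=
  (linkVia_comap_iff σ.symm.surjective).mpr h

theorem isPrime_mapEquiv (σ : R ≃+* R) (hP : P.IsPrime) : (P.mapEquiv σ).IsPrime :=
  (isPrime_comap_iff σ.symm.surjective).mpr hP

theorem mapEquiv_mul (σ τ : R ≃+* R) (I : TwoSidedIdeal R) :
    I.mapEquiv (σ * τ) = (I.mapEquiv τ).mapEquiv σ :=
  rfl

end Link

theorem link_of_invariant_parts_gives_links_general [Ring R] [IsNoetherianRing R]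
    [IsNoetherianRing Rᵐᵒᵖ] (σ : R ≃+* R) {Q P : TwoSidedIdeal R} (hQ : Q.IsPrime)
    (hP : P.IsPrime) {n m : ℕ} (hQn : Q.mapEquiv (σ ^ n) = Q)
    (hlink : ∃ A, LinkVia (⨅ i ∈ Finset.range n, Q.mapEquiv (σ ^ i))
      (⨅ i ∈ Finset.range m, P.mapEquiv (σ ^ i)) A) (i : ℕ) :
    ∃ j, ∃ B, LinkVia (Q.mapEquiv (σ ^ i)) (P.mapEquiv (σ ^ j)) B := by
  obtain ⟨A, hA⟩ := hlink
  obtain ⟨a, ha, A', hA'⟩ := hA.exists_linkVia_left fun _ _ => isPrime_mapEquiv _ hQ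
  obtain ⟨b, -, B, hB⟩ := hA'.exists_linkVia_right fun _ _ => isPrime_mapEquiv _ hP
  have hshift : i + (n - a) + a = i + n := by have := Finset.mem_range.mp ha; omega
  have hB_shift := hB.mapEquiv (σ ^ (i + (n - a)))
  rw [← mapEquiv_mul, ← mapEquiv_mul, ← pow_add, ← pow_add, hshift, pow_add, mapEquiv_mul,
    hQn] at hB_shift
  exact ⟨_, _, hB_shift⟩

/-- converse: if the σ-invariant parts `Q⁰`, `P⁰` of σ-semistable prime
ideals `Q`, `P` are linked, then for every `i ≥ 0` there is `j ≥ 0` with a link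
`σⁱ(Q) ⇝ σʲ(P)`. -/
theorem link_of_invariant_parts_gives_links [Ring R] [IsNoetherianRing R]
    [IsNoetherianRing Rᵐᵒᵖ] (σ : R ≃+* R) (Q P : TwoSidedIdeal R)
    (hQ : Q.IsPrime) (hP : P.IsPrime)
    (n : ℕ) (hn : 1 ≤ n)
    (hQn : TwoSidedIdeal.mapEquiv (σ ^ n) Q = Q)
    (hPn : TwoSidedIdeal.mapEquiv (σ ^ n) P = P)
    (Q0 P0 : TwoSidedIdeal R)
    (hQ0 : Q0 = ⨅ i ∈ Finset.range n, TwoSidedIdeal.mapEquiv (σ ^ i) Q)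
    (hP0 : P0 = ⨅ i ∈ Finset.range n, TwoSidedIdeal.mapEquiv (σ ^ i) P)
    (hlink : ∃ A : TwoSidedIdeal R, LinkVia Q0 P0 A) :
    ∀ i : ℕ, ∃ j : ℕ, ∃ B : TwoSidedIdeal R,
      LinkVia (TwoSidedIdeal.mapEquiv (σ ^ i) Q) (TwoSidedIdeal.mapEquiv (σ ^ j) P) B := by
  subst hQ0 hP0
  exact link_of_invariant_parts_gives_links_general σ hQ hP hQn hlink
end
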